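/- Let $\preceq$ be a convex preorder on $X \subset V \setminus \{0\}$, and for each $\preceq$-equivalence class $\mathcal C$ let $\preceq_{\mathcal C}$ be a convex preorder on $\mathcal C$. Define $x \preceq' y$ iff either $x \prec y$, or $x$ and $y$ belong to the same $\preceq$-equivalence class $\mathcal C$ and $x \preceq_{\mathcal C} y$. Then $\preceq'$ is a convex preorder on $X$. -/

import Mathlib

open scoped BigOperators

/-- `nnspan S` is the set of finite linear combinations of elements of `S`
with non-negative real coefficients (by convention `nnspan ∅ = {0}`). -/
def nnspan {V : Type*} [AddCommGroup V] [Module ℝ V] (S : Set V) : Set V :=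
  {x | ∃ (n : ℕ) (c : Fin n → ℝ) (v : Fin n → V),
    (∀ i, 0 ≤ c i) ∧ (∀ i, v i ∈ S) ∧ x = ∑ i, c i • v i}

/-- Minkowski sum of two subsets of `V`. -/
def setAdd {V : Type*} [AddCommGroup V] [Module ℝ V] (A B : Set V) : Set V :=
  {z | ∃ a ∈ A, ∃ b ∈ B, z = a + b}

/-- Elements of `X` strictly below `x` for the preorder `le`. -/
def strictBelow {V : Type*} [AddCommGroup V] [Module ℝ V]
    (le : V → V → Prop) (x : V) (X : Set V) : Set V :=
  {y ∈ X | le y x ∧ ¬ le x y}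

/-- Elements of `X` strictly above `x` for the preorder `le`. -/
def strictAbove {V : Type*} [AddCommGroup V] [Module ℝ V]
    (le : V → V → Prop) (x : V) (X : Set V) : Set V :=
  {y ∈ X | le x y ∧ ¬ le y x}

/-- The `le`-equivalence class of `x` inside `X`. -/
def eqClass {V : Type*} [AddCommGroup V] [Module ℝ V]
    (le : V → V → Prop) (x : V) (X : Set V) : Set V :=
  {y ∈ X | le x y ∧ le y x}

/-- A convex preorder on `X ⊆ V \ {0}`: a total preorder on `X` such that for every
equivalence class `𝒞`, the triple (strictly below `𝒞`, `𝒞`, strictly above `𝒞`) is a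
face, i.e. for any non-negative combinations `x₋` (of the strictly-below set) and `x₊`
(of the strictly-above set) with `x₋ - x₊ ∈ span ℝ 𝒞`, one has `x₋ = x₊ = 0`. -/
def IsConvexPreorder {V : Type*} [AddCommGroup V] [Module ℝ V]
    (X : Set V) (le : V → V → Prop) : Prop :=
  (∀ x ∈ X, le x x) ∧
  (∀ x ∈ X, ∀ y ∈ X, ∀ z ∈ X, le x y → le y z → le x z) ∧
  (∀ x ∈ X, ∀ y ∈ X, le x y ∨ le y x) ∧
  (∀ x ∈ X, ∀ xm ∈ nnspan (strictBelow le x X), ∀ xp ∈ nnspan (strictAbove le x X),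
    xm - xp ∈ Submodule.span ℝ (eqClass le x X) → xm = 0 ∧ xp = 0)

theorem nnspan_cons {V : Type*} [AddCommGroup V] [Module ℝ V] {S : Set V} {x v : V} {c : ℝ}
    (hx : x ∈ nnspan S) (hc : 0 ≤ c) (hv : v ∈ S) : c • v + x ∈ nnspan S := by
  obtain ⟨n, d, w, hd, hw, rfl⟩ := hx
  refine ⟨n + 1, Fin.cons c d, Fin.cons v w, ?_, ?_, ?_⟩
  · intro i
    refine Fin.cases ?_ (fun j => ?_) i
    · simpa using hc
    · simpa using hd j
  · intro i
    refine Fin.cases ?_ (fun j => ?_) i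
    · simpa using hv
    · simpa using hw j
  · simp [Fin.sum_univ_succ]

theorem nnspan_zero {V : Type*} [AddCommGroup V] [Module ℝ V] (S : Set V) :
    (0 : V) ∈ nnspan S :=
  ⟨0, Fin.elim0, Fin.elim0, fun i => i.elim0, fun i => i.elim0, by simp⟩

theorem nnspan_split {V : Type*} [AddCommGroup V] [Module ℝ V] {S A B : Set V}
    (hS : ∀ v ∈ S, v ∈ A ∨ v ∈ B) {x : V} (hx : x ∈ nnspan S) :
    ∃ a ∈ nnspan A, ∃ b ∈ nnspan B, x = a + b := by
  obtain ⟨n, c, v, hc, hv, rfl⟩ := hx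
  induction n with
  | zero => exact ⟨0, nnspan_zero A, 0, nnspan_zero B, by simp⟩
  | succ n ih =>
    obtain ⟨a, ha, b, hb, h⟩ := ih (fun i => c i.succ) (fun i => v i.succ)
      (fun i => hc _) (fun i => hv _)
    rw [Fin.sum_univ_succ, h]
    rcases hS _ (hv 0) with h0 | h0
    · exact ⟨_, nnspan_cons ha (hc 0) h0, b, hb, by abel⟩
    · exact ⟨a, ha, _, nnspan_cons hb (hc 0) h0, by abel⟩

theorem nnspan_sub_span {V : Type*} [AddCommGroup V] [Module ℝ V] {S C : Set V}
    (hS : S ⊆ C) {x : V} (hx : x ∈ nnspan S) : x ∈ Submodule.span ℝ C := by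
  obtain ⟨n, c, v, hc, hv, rfl⟩ := hx
  exact Submodule.sum_mem _ fun i _ =>
    Submodule.smul_mem _ _ (Submodule.subset_span (hS (hv i)))

/-- refinement lemma. Let `⪯` be a convex preorder on `X ⊆ V \ {0}`
and, for each `⪯`-equivalence class `𝒞`, let `⪯𝒞` (here realized by a single relation
`le2` restricting to a convex preorder on each class) be a convex preorder on `𝒞`.
Define `x ⪯' y` iff either `x ≺ y`, or `x, y` lie in the same `⪯`-equivalence class
and `x ⪯𝒞 y`. Then `⪯'` is a convex preorder on `X`. -/
theorem convexPreorder_refinement {V : Type*} [AddCommGroup V] [Module ℝ V]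
    (X : Set V) (hX0 : (0 : V) ∉ X) (le le2 : V → V → Prop)
    (hconv : IsConvexPreorder X le)
    (hclass : ∀ x ∈ X, IsConvexPreorder (eqClass le x X) le2) :
    IsConvexPreorder X
      (fun x y => (le x y ∧ ¬ le y x) ∨ (le x y ∧ le y x ∧ le2 x y)) := by
  obtain ⟨hr, ht, htot, hf⟩ := hconv
  refine ⟨?_, ?_, ?_, ?_⟩
  · intro x hx
    have h := hr x hx
    exact Or.inr ⟨h, h, (hclass x hx).1 x ⟨hx, h, h⟩⟩
  · intro x hx y hy z hz hxy hyz
    have hxx := hr x hx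
    have hxy1 : le x y := by rcases hxy with h | h <;> exact h.1
    have hyz1 : le y z := by rcases hyz with h | h <;> exact h.1
    have hxz : le x z := ht x hx y hy z hz hxy1 hyz1
    by_cases hzx : le z x
    · have hyx : le y x := ht y hy z hz x hx hyz1 hzx
      have hzy : le z y := ht z hz x hx y hy hzx hxy1
      have h1 : le2 x y := by
        rcases hxy with h | h
        · exact absurd hyx h.2
        · exact h.2.2
      have h2 : le2 y z := by
        rcases hyz with h | h
        · exact absurd hzy h.2
        · exact h.2.2
      exact Or.inr ⟨hxz, hzx, (hclass x hx).2.1 x ⟨hx, hxx, hxx⟩ y ⟨hy, hxy1, hyx⟩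
        z ⟨hz, hxz, hzx⟩ h1 h2⟩
    · exact Or.inl ⟨hxz, hzx⟩
  · intro x hx y hy
    have hxx := hr x hx
    have hc := (hclass x hx).2.2.1 x ⟨hx, hxx, hxx⟩ y
    have h := htot x hx y hy
    simp only [eqClass, Set.mem_ofPred_eq] at hc
    tauto
  · intro x hx xm hxm xp hxp hsub
    have hxx := hr x hx
    obtain ⟨a, ha, b, hb, rfl⟩ := nnspan_split (A := strictBelow le x X)
      (B := strictBelow le2 x (eqClass le x X)) (by
        intro v hv
        simp only [strictBelow, eqClass, Set.mem_ofPred_eq] at hv ⊢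
        tauto) hxm
    obtain ⟨a', ha', b', hb', rfl⟩ := nnspan_split (A := strictAbove le x X)
      (B := strictAbove le2 x (eqClass le x X)) (by
        intro v hv
        simp only [strictAbove, eqClass, Set.mem_ofPred_eq] at hv ⊢
        tauto) hxp
    have hsub2 := Submodule.span_mono (R := ℝ) (t := eqClass le2 x (eqClass le x X)) (by
        intro v hv
        simp only [eqClass, Set.mem_ofPred_eq] at hv ⊢
        tauto) hsub
    have hsub1 := Submodule.span_mono (R := ℝ) (t := eqClass le x X) (fun v hv => hv.1) hsub2
    have hb1 := nnspan_sub_span (C := eqClass le x X) (fun v hv => hv.1) hb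
    have hb2 := nnspan_sub_span (C := eqClass le x X) (fun v hv => hv.1) hb'
    obtain ⟨rfl, rfl⟩ := hf x hx a ha a' ha' (by
      have := Submodule.add_mem _ (Submodule.sub_mem _ hsub1 hb1) hb2
      convert this using 1
      abel)
    simp only [zero_add] at hsub2 ⊢
    exact (hclass x hx).2.2.2 x ⟨hx, hxx, hxx⟩ b hb b' hb' hsub2
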